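/- For every integer k ≥ 4 with k ≡ 0 (mod 4), the liminferior as n → ∞ of Φ_k(n) · log log n / n^k equals (2^{k/2}/(2^{k/2} − 1)) · ζ(k/2)^{−1} · e^{−γ}, where ζ is the Riemann zeta function and γ is the Euler–Mascheroni constant; that is, the minimal order of Φ_k(n) is (2^{k/2}/(2^{k/2} − 1)) ζ(k/2)^{−1} e^{−γ} n^k / log log n. -/

import Mathlib

open Filter Real

/-- `Φ_k(n)`: the number of `k`-tuples `(x_1, …, x_k)` over `ℤ/nℤ` such that
`x_1² + ⋯ + x_k²` is a unit modulo `n`. -/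
noncomputable def genTotient (k n : ℕ) : ℕ :=
  Nat.card {x : Fin k → ZMod n // IsUnit (∑ i, x i ^ 2)}

open Topology MeasureTheory


lemma aux_log_div_summable :
    Summable (fun n : ℕ => Real.log n / (n * (n - 1 : ℝ))) := by
  have h : Summable (fun n : ℕ => 4 * (n : ℝ) ^ (-(3/2) : ℝ)) :=
    (Real.summable_nat_rpow.mpr (by norm_num)).mul_left 4
  refine Summable.of_norm_bounded_eventually_nat h ?_
  filter_upwards [eventually_ge_atTop 2] with n hn
  have hn' : (2 : ℝ) ≤ n := by exact_mod_cast hn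
  have hl : 0 ≤ Real.log n := Real.log_nonneg (by linarith)
  rw [Real.norm_of_nonneg (div_nonneg hl (by nlinarith))]
  have h1 : Real.log n ≤ 2 * (n : ℝ) ^ (1/2 : ℝ) := by
    have := Real.log_le_rpow_div (x := n) (ε := 1/2) (by linarith) (by norm_num)
    linarith
  have h2 : (n : ℝ) ^ (-(3/2) : ℝ) = (n : ℝ) ^ (1/2 : ℝ) / (n : ℝ) ^ 2 := by
    rw [← Real.rpow_natCast, ← Real.rpow_sub (by linarith)]; norm_num
  rw [h2, div_le_iff₀ (by nlinarith)]
  have h3 : (0 : ℝ) < (n : ℝ) ^ (1/2 : ℝ) := by positivity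
  have h4 : (n : ℝ)^2 / 2 ≤ n * (n - 1) := by nlinarith
  calc Real.log n ≤ 2 * (n : ℝ) ^ (1/2 : ℝ) := h1
    _ = 4 * ((n : ℝ) ^ (1/2 : ℝ) / (n : ℝ) ^ 2) * ((n : ℝ)^2 / 2) := by field_simp; norm_num
    _ ≤ _ := by gcongr

lemma mertens_one : ∃ C : ℝ, ∀ N : ℕ, 1 ≤ N →
    |∑ p ∈ N.primesLE, Real.log p / p - Real.log N| ≤ C := by
  set K := ∑' n : ℕ, Real.log n / (n * (n - 1 : ℝ)) with hK
  refine ⟨Real.log 4 + 1 + K, fun N hN => ?_⟩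
  have hNpos : (0 : ℝ) < N := by exact_mod_cast hN
  have hnn : ∀ n : ℕ, 0 ≤ Real.log n / (n * (n - 1 : ℝ)) := by
    intro n
    rcases Nat.eq_zero_or_pos n with h | h
    · simp [h]
    · have : (1 : ℝ) ≤ n := by exact_mod_cast h
      exact div_nonneg (Real.log_nonneg this) (mul_nonneg (by linarith) (by linarith))
  have hK0 : 0 ≤ K := tsum_nonneg hnn
  have hfac : Real.log (N.factorial) =
      ∑ p ∈ N.primesLE, (N.factorial.factorization p : ℝ) * Real.log p := by
    rw [Real.log_nat_eq_sum_factorization]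
    apply Finsupp.sum_of_support_subset
    · intro p hp
      rw [Nat.support_factorization, Nat.mem_primeFactors] at hp
      exact Nat.mem_primesLE.mpr ⟨(hp.1.dvd_factorial).mp hp.2.1, hp.1⟩
    · simp
  have hlow : ∀ p ∈ N.primesLE, (N : ℝ) * (Real.log p / p) - Real.log p ≤
      (N.factorial.factorization p : ℝ) * Real.log p := by
    intro p hp
    obtain ⟨hpN, hp⟩ := Nat.mem_primesLE.mp hp
    have h1 : N / p ≤ N.factorial.factorization p := by
      rw [Nat.factorization_factorial hp (b := Nat.log p N + 2) (by omega)]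
      have := Finset.single_le_sum (f := fun i => N / p ^ i) (s := Finset.Ico 1 (Nat.log p N + 2))
        (fun _ _ => Nat.zero_le _) (a := 1) (by simp)
      simpa using this
    have h2 : (N : ℝ) / p - 1 ≤ (N / p : ℕ) := by
      have := Nat.lt_floor_add_one ((N : ℝ) / p)
      rw [Nat.floor_div_natCast, Nat.floor_natCast] at this
      linarith
    have h3 : (N : ℝ) / p - 1 ≤ N.factorial.factorization p :=
      h2.trans (by exact_mod_cast h1)
    have hl : 0 ≤ Real.log p := Real.log_natCast_nonneg p
    calc (N : ℝ) * (Real.log p / p) - Real.log p = ((N : ℝ) / p - 1) * Real.log p := by ring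
      _ ≤ _ := by gcongr
  have hup : ∀ p ∈ N.primesLE, (N.factorial.factorization p : ℝ) * Real.log p ≤
      N * (Real.log p / p) + N * (Real.log p / (p * (p - 1 : ℝ))) := by
    intro p hp
    obtain ⟨hpN, hp⟩ := Nat.mem_primesLE.mp hp
    have := Fact.mk hp
    have h0 := sub_one_mul_padicValNat_factorial (p := p) N
    rw [← Nat.factorization_def _ hp] at h0
    have h1 : (p - 1) * N.factorial.factorization p ≤ N := by omega
    have hp2 : (2 : ℝ) ≤ p := by exact_mod_cast hp.two_le
    have h2 : ((p : ℝ) - 1) * N.factorial.factorization p ≤ N := by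
      have : (((p - 1) * N.factorial.factorization p : ℕ) : ℝ) ≤ N := by exact_mod_cast h1
      rw [Nat.cast_mul, Nat.cast_sub hp.one_le] at this
      simpa using this
    have hl : 0 ≤ Real.log p := Real.log_natCast_nonneg p
    have h3 : (N.factorial.factorization p : ℝ) ≤ N / (p - 1) := by
      rw [le_div_iff₀ (by linarith)]; linarith
    calc (N.factorial.factorization p : ℝ) * Real.log p ≤ N / (p - 1) * Real.log p := by gcongr
      _ = _ := by
        have : (p : ℝ) - 1 ≠ 0 := by linarith
        field_simp; ring
  have hS1 : (N : ℝ) * ∑ p ∈ N.primesLE, Real.log p / p - Real.log 4 * N ≤ Real.log N.factorial := by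
    have := Finset.sum_le_sum hlow
    rw [← hfac, Finset.sum_sub_distrib, ← Finset.mul_sum, ← Chebyshev.theta_eq_sum_primesLE_log] at this
    have h4 := Chebyshev.theta_le_log4_mul_x (x := N) hNpos.le
    linarith
  have hS2 : Real.log N.factorial ≤ (N : ℝ) * ∑ p ∈ N.primesLE, Real.log p / p + N * K := by
    have := Finset.sum_le_sum hup
    rw [← hfac, Finset.sum_add_distrib, ← Finset.mul_sum, ← Finset.mul_sum] at this
    have h4 := aux_log_div_summable.sum_le_tsum N.primesLE (fun i _ => hnn i)
    have := mul_le_mul_of_nonneg_left h4 hNpos.le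
    linarith
  have hf1 : Real.log N.factorial ≤ N * Real.log N := by
    rw [← Real.log_pow]
    apply Real.log_le_log (by exact_mod_cast N.factorial_pos)
    exact_mod_cast N.factorial_le_pow
  have hf2 : N * Real.log N - N ≤ Real.log N.factorial := by
    have h1 := Stirling.le_log_factorial_stirling (n := N) (by omega)
    have h2 : 0 ≤ Real.log N := Real.log_natCast_nonneg N
    have h3 : 0 ≤ Real.log (2 * π) := Real.log_nonneg (by linarith [Real.pi_gt_three])
    linarith
  have hl4 : 0 ≤ Real.log 4 := Real.log_nonneg (by norm_num)
  rw [abs_le]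
  constructor
  · have : (N : ℝ) * (-(1 + K)) ≤ N * (∑ p ∈ N.primesLE, Real.log p / p - Real.log N) := by linarith
    have := le_of_mul_le_mul_left this hNpos
    linarith
  · have : (N : ℝ) * (∑ p ∈ N.primesLE, Real.log p / p - Real.log N) ≤ N * Real.log 4 := by linarith
    have := le_of_mul_le_mul_left this hNpos
    linarith

lemma sum_primesLE_succ_eq (f : ℕ → ℝ) (n : ℕ) :
    ∑ p ∈ (n + 1).primesLE, f p = ∑ i ∈ Finset.range n, if (i + 2).Prime then f (i + 2) else 0 := by
  induction n with
  | zero => simp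
  | succ n ih =>
    rw [Finset.sum_range_succ, ← ih, Nat.primesLE_eq_filter_range, Nat.primesLE_eq_filter_range,
      Finset.sum_filter, Finset.sum_filter, Finset.sum_range_succ _ (n + 1 + 1)]

lemma exists_lim_loglog : ∃ c : ℝ, Tendsto (fun n : ℕ =>
    ∑ i ∈ Finset.range (n + 1), (Real.log (i + 2 : ℕ) - Real.log (i + 1 : ℕ)) / Real.log (i + 2 : ℕ)
      - Real.log (Real.log (n + 2 : ℕ))) atTop (𝓝 c) := by
  set E := fun n : ℕ =>
    ∑ i ∈ Finset.range (n + 1), (Real.log (i + 2 : ℕ) - Real.log (i + 1 : ℕ)) / Real.log (i + 2 : ℕ)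
      - Real.log (Real.log (n + 2 : ℕ)) with hE
  have key : ∀ n : ℕ, E (n + 1) ≤ E n ∧
      E n - 1 / Real.log (n + 2 : ℕ) ≤ E (n + 1) - 1 / Real.log (n + 1 + 2 : ℕ) := by
    intro n
    simp only [hE]
    rw [Finset.sum_range_succ _ (n + 1)]
    have e1 : n + 1 + 1 = n + 2 := by ring
    rw [e1]
    set a := Real.log (n + 2 : ℕ)
    set b := Real.log (n + 1 + 2 : ℕ)
    set S := ∑ i ∈ Finset.range (n + 1), (Real.log (i + 2 : ℕ) - Real.log (i + 1 : ℕ)) / Real.log (i + 2 : ℕ)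
    have ha : 0 < a := Real.log_pos (by push_cast; linarith)
    have hab : a ≤ b := Real.log_le_log (by positivity) (by push_cast; linarith)
    have hb : 0 < b := by linarith
    have hba : b - a ≤ 1 := by
      have h1 : b - a = Real.log ((n + 1 + 2 : ℕ) / (n + 2 : ℕ)) := by
        rw [Real.log_div (by positivity) (by positivity)]
      rw [h1]
      have h2 := Real.log_le_sub_one_of_pos (x := ((n + 1 + 2 : ℕ) : ℝ) / (n + 2 : ℕ)) (by positivity)
      have h3 : ((n + 1 + 2 : ℕ) : ℝ) / (n + 2 : ℕ) ≤ 2 := by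
        rw [div_le_iff₀ (by positivity)]; push_cast; linarith
      linarith
    have hl1 : Real.log b - Real.log a ≤ (b - a) / a := by
      rw [← Real.log_div hb.ne' ha.ne']
      have := Real.log_le_sub_one_of_pos (x := b / a) (by positivity)
      rw [sub_div, div_self ha.ne']; exact this
    have hl2 : (b - a) / b ≤ Real.log b - Real.log a := by
      have := Real.log_le_sub_one_of_pos (x := a / b) (by positivity)
      rw [Real.log_div ha.ne' hb.ne'] at this
      rw [sub_div, div_self hb.ne']; linarith
    constructor
    · linarith
    · have h5 : (b - a) / a - (b - a) / b ≤ 1 / a - 1 / b := by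
        have e : (b - a) / a - (b - a) / b = (b - a) * (1 / a - 1 / b) := by ring
        rw [e]
        have : 0 ≤ 1 / a - 1 / b := by
          rw [sub_nonneg]; exact one_div_le_one_div_of_le ha hab
        nlinarith
      linarith
  have hanti : Antitone E := antitone_nat_of_succ_le fun n => (key n).1
  have hmono : Monotone (fun n : ℕ => E n - 1 / Real.log (n + 2 : ℕ)) := by
    refine monotone_nat_of_le_succ fun n => ?_
    have := (key n).2
    exact this
  have hbdd : BddBelow (Set.range E) := by
    refine ⟨E 0 - 1 / Real.log (0 + 2 : ℕ), ?_⟩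
    rintro _ ⟨n, rfl⟩
    have h1 := hmono (Nat.zero_le n)
    have h2 : 0 ≤ 1 / Real.log (n + 2 : ℕ) := by
      have : 0 ≤ Real.log (n + 2 : ℕ) := Real.log_natCast_nonneg _
      positivity
    simp only at h1
    linarith
  exact ⟨_, tendsto_atTop_ciInf hanti hbdd⟩

lemma exists_lim_inv : ∃ c : ℝ, Tendsto (fun n : ℕ =>
    ∑ p ∈ (n + 2).primesLE, (1 / (p : ℝ)) - Real.log (Real.log (n + 2 : ℕ))) atTop (𝓝 c) := by
  obtain ⟨C, hC⟩ := mertens_one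
  have hpos : ∀ n : ℕ, 0 < Real.log (n + 2 : ℕ) := fun n => Real.log_pos (by push_cast; linarith)
  have hcs := Antitone.cauchySeq_series_mul_of_tendsto_zero_of_bounded
    (f := fun i : ℕ => (Real.log (i + 2 : ℕ))⁻¹)
    (z := fun i : ℕ => (if (i + 2).Prime then Real.log (i + 2 : ℕ) / (i + 2 : ℕ) else 0) -
      (Real.log (i + 2 : ℕ) - Real.log (i + 1 : ℕ))) (b := C) ?_ ?_ ?_
  · obtain ⟨c1, hc1⟩ := cauchySeq_tendsto_of_complete hcs
    obtain ⟨c2, hc2⟩ := exists_lim_loglog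
    refine ⟨c1 + c2, ((hc1.comp (tendsto_add_atTop_nat 1)).add hc2).congr fun n => ?_⟩
    rw [sum_primesLE_succ_eq (fun p => 1 / (p : ℝ)) (n + 1)]
    simp only [Function.comp]
    rw [← add_sub_assoc, ← Finset.sum_add_distrib]
    congr 1
    refine Finset.sum_congr rfl fun i _ => ?_
    have := hpos i
    simp only [smul_eq_mul]
    split_ifs
    · field_simp; ring
    · field_simp; ring
  · intro i j hij
    exact inv_anti₀ (hpos i) (Real.log_le_log (by positivity) (by exact_mod_cast (by omega)))
  · apply Tendsto.inv_tendsto_atTop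
    exact Real.tendsto_log_atTop.comp (tendsto_natCast_atTop_atTop.comp (tendsto_add_atTop_nat 2))
  · intro n
    have h := hC (n + 1) (by omega)
    rw [sum_primesLE_succ_eq (fun p => Real.log p / (p : ℝ)) n] at h
    have h2 := Finset.sum_range_sub (fun i : ℕ => Real.log (i + 1 : ℕ)) n
    rw [Finset.sum_sub_distrib]
    simp only [Nat.zero_add, Nat.cast_one, Real.log_one, sub_zero] at h2
    rw [show (∑ i ∈ Finset.range n, (Real.log (i + 2 : ℕ) - Real.log (i + 1 : ℕ))) =
      Real.log (n + 1 : ℕ) from h2]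
    exact h

lemma neg_log_sub_bounds {y : ℝ} (h0 : 0 ≤ y) (h1 : y ≤ 1 / 2) :
    0 ≤ -Real.log (1 - y) - y ∧ -Real.log (1 - y) - y ≤ 2 * y ^ 2 := by
  have h := Real.log_le_sub_one_of_pos (x := 1 - y) (by linarith)
  have h2 := Real.abs_log_sub_add_sum_range_le (x := y) (by rw [abs_of_nonneg h0]; linarith) 1
  simp only [Finset.range_one, Finset.sum_singleton, abs_of_nonneg h0] at h2
  norm_num at h2
  constructor
  · linarith
  · have h3 : y ^ 2 / (1 - y) ≤ 2 * y ^ 2 := by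
      rw [div_le_iff₀ (by linarith)]; nlinarith [sq_nonneg y]
    have := (abs_le.mp h2).1
    linarith

lemma exists_lim_neg_log : ∃ c : ℝ, Tendsto (fun N : ℕ =>
    ∑ p ∈ N.primesLE, (-Real.log (1 - 1 / (p : ℝ))) - Real.log (Real.log N)) atTop (𝓝 c) := by
  obtain ⟨c1, hc1⟩ := exists_lim_inv
  have hs : Summable (fun i : ℕ => if (i + 2).Prime then
      (-Real.log (1 - 1 / ((i + 2 : ℕ) : ℝ)) - 1 / ((i + 2 : ℕ) : ℝ)) else 0) := by
    have h : Summable (fun i : ℕ => 2 * (1 / ((i + 2 : ℕ) : ℝ)) ^ 2) := by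
      have := (summable_nat_add_iff 2).mpr (Real.summable_one_div_nat_pow (p := 2).mpr (by norm_num))
      refine (this.mul_left 2).congr fun i => by ring
    refine Summable.of_nonneg_of_le (fun i => ?_) (fun i => ?_) h
    · have := neg_log_sub_bounds (y := 1 / ((i + 2 : ℕ) : ℝ)) (by positivity)
        (one_div_le_one_div_of_le (by norm_num) (by push_cast; linarith))
      split_ifs
      exacts [this.1, le_rfl]
    · have := neg_log_sub_bounds (y := 1 / ((i + 2 : ℕ) : ℝ)) (by positivity)
        (one_div_le_one_div_of_le (by norm_num) (by push_cast; linarith))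
      split_ifs
      exacts [this.2, by positivity]
  have ht := (hs.hasSum.tendsto_sum_nat).comp (tendsto_add_atTop_nat 1)
  refine ⟨_, (tendsto_add_atTop_iff_nat 2).mp ((hc1.add ht).congr fun n => ?_)⟩
  simp only [Function.comp]
  rw [sum_primesLE_succ_eq (fun p => 1 / (p : ℝ)) (n + 1),
    sum_primesLE_succ_eq (fun p => -Real.log (1 - 1 / (p : ℝ))) (n + 1), sub_add_eq_add_sub,
    ← Finset.sum_add_distrib]
  congr 1
  refine Finset.sum_congr rfl fun i _ => ?_
  split_ifs <;> ring

lemma abel_laplace {ι : Type*} [Countable ι] (a l : ι → ℝ) (hl : ∀ i, 0 < l i) {d : ℝ} (hd : 0 < d)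
    (hs : Summable fun i => |a i| * Real.exp (-d * l i)) (h : ℝ → ℝ)
    (hh : ∀ u > 0, HasSum (fun i => if l i ≤ u then a i else 0) (h u)) :
    HasSum (fun i => a i * Real.exp (-d * l i)) (∫ u in Set.Ioi (0:ℝ), d * Real.exp (-d * u) * h u) := by
  have hsub : ∀ i, Set.Ici (l i) ∩ Set.Ioi 0 = Set.Ici (l i) := fun i =>
    Set.inter_eq_left.mpr fun x hx => lt_of_lt_of_le (hl i) hx
  have hint : ∀ c : ℝ, IntegrableOn (fun u : ℝ => d * Real.exp (-d * u)) (Set.Ici c) := fun c => by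
    rw [integrableOn_Ici_iff_integrableOn_Ioi]
    exact (integrableOn_exp_mul_Ioi (by linarith) c).const_mul d
  have hval : ∀ c : ℝ, ∫ u in Set.Ici c, d * Real.exp (-d * u) = Real.exp (-d * c) := fun c => by
    rw [integral_Ici_eq_integral_Ioi, integral_const_mul, integral_exp_mul_Ioi (by linarith)]
    field_simp
  have hF : ∀ i, ∀ c : ℝ, ∫ u in Set.Ioi (0:ℝ), (Set.Ici (l i)).indicator (fun u => c * (d * Real.exp (-d * u))) u
      = c * Real.exp (-d * l i) := by
    intro i c
    rw [integral_indicator measurableSet_Ici, Measure.restrict_restrict measurableSet_Ici, hsub,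
      integral_const_mul, hval]
  have key := hasSum_integral_of_summable_integral_norm (μ := volume.restrict (Set.Ioi (0:ℝ)))
    (F := fun i u => (Set.Ici (l i)).indicator (fun u => a i * (d * Real.exp (-d * u))) u) ?_ ?_
  · simp only [hF] at key
    refine (congrArg (HasSum (fun i => a i * Real.exp (-d * l i))) ?_).mpr key
    apply setIntegral_congr_fun measurableSet_Ioi
    intro u hu
    have := ((hh u hu).mul_left (d * Real.exp (-d * u))).tsum_eq
    simp only
    rw [← this]
    refine tsum_congr fun i => ?_
    by_cases hi : l i ≤ u
    · simp [hi]; ring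
    · simp [hi]
  · intro i
    rw [integrable_indicator_iff measurableSet_Ici, IntegrableOn,
      Measure.restrict_restrict measurableSet_Ici, hsub]
    exact (hint (l i)).const_mul _
  · refine hs.congr fun i => ?_
    rw [← hF i |a i|]
    refine integral_congr_ae (Eventually.of_forall fun u => ?_)
    simp only [norm_indicator_eq_indicator_norm]
    congr 1
    ext v
    rw [norm_mul, Real.norm_eq_abs, Real.norm_of_nonneg (by positivity)]

lemma laplace_tendsto (h : ℝ → ℝ) (hm : Measurable h) {L M : ℝ} (hM : ∀ u > 0, |h u| ≤ M)
    (hL : Tendsto h atTop (𝓝 L)) :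
    Tendsto (fun d : ℝ => ∫ u in Set.Ioi (0:ℝ), d * Real.exp (-d * u) * h u) (𝓝[>] 0) (𝓝 L) := by
  have h1 : Tendsto (fun d : ℝ => ∫ v in Set.Ioi (0:ℝ), Real.exp (-v) * h (d⁻¹ * v)) (𝓝[>] 0)
      (𝓝 (∫ v in Set.Ioi (0:ℝ), Real.exp (-v) * L)) := by
    refine tendsto_integral_filter_of_dominated_convergence (fun v => M * Real.exp (-v)) ?_ ?_ ?_ ?_
    · refine Eventually.of_forall fun d => Measurable.aestronglyMeasurable ?_
      exact (Real.measurable_exp.comp measurable_neg).mul (hm.comp (measurable_const_mul _))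
    · filter_upwards [self_mem_nhdsWithin] with d hd
      filter_upwards [ae_restrict_mem measurableSet_Ioi] with v hv
      rw [norm_mul, Real.norm_of_nonneg (Real.exp_pos _).le, mul_comm]
      gcongr
      exact hM _ (mul_pos (inv_pos.mpr hd) hv)
    · exact (integrableOn_exp_neg_Ioi 0).const_mul M
    · filter_upwards [ae_restrict_mem measurableSet_Ioi] with v hv
      refine Tendsto.const_mul _ (hL.comp ?_)
      exact tendsto_inv_nhdsGT_zero.atTop_mul_const hv
  rw [integral_mul_const, integral_exp_neg_Ioi_zero, one_mul] at h1
  refine h1.congr' ?_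
  filter_upwards [self_mem_nhdsWithin] with d hd
  have hd : 0 < d := hd
  have := integral_comp_mul_left_Ioi (fun v => Real.exp (-v) * h (d⁻¹ * v)) 0 hd
  rw [mul_zero, smul_eq_mul, eq_comm, inv_mul_eq_iff_eq_mul₀ hd.ne'] at this
  rw [this, ← integral_const_mul]
  refine integral_congr_ae (Eventually.of_forall fun u => ?_)
  simp only [inv_mul_cancel_left₀ hd.ne']
  ring_nf

noncomputable def primeA (u : ℝ) : ℝ := ∑ p ∈ (⌊Real.exp u⌋₊).primesLE, (-Real.log (1 - 1 / (p : ℝ)))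
noncomputable def harmB (u : ℝ) : ℝ := ∑ i ∈ Finset.range ⌊u⌋₊, 1 / ((i : ℝ) + 1)

lemma neg_log_prime_nonneg {p : ℕ} (hp : p.Prime) : 0 ≤ -Real.log (1 - 1 / (p : ℝ)) := by
  have hp2 : (2 : ℝ) ≤ p := by exact_mod_cast hp.two_le
  have := neg_log_sub_bounds (y := 1 / (p : ℝ)) (by positivity)
    (one_div_le_one_div_of_le (by norm_num) hp2)
  have h2 : 0 ≤ 1 / (p : ℝ) := by positivity
  linarith [this.1]

lemma primeA_mono : Monotone primeA := by
  intro u v huv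
  refine Finset.sum_le_sum_of_subset_of_nonneg (Nat.primesLE_mono (Nat.floor_mono (Real.exp_le_exp.mpr huv))) ?_
  intro p hp _
  exact neg_log_prime_nonneg (Nat.mem_primesLE.mp hp).2

lemma harmB_mono : Monotone harmB := by
  intro u v huv
  refine Finset.sum_le_sum_of_subset_of_nonneg (Finset.range_mono (Nat.floor_mono huv)) ?_
  intro p hp _
  positivity

lemma primeA_nonneg (u : ℝ) : 0 ≤ primeA u :=
  Finset.sum_nonneg fun _ hp => neg_log_prime_nonneg (Nat.mem_primesLE.mp hp).2

lemma harmB_nonneg (u : ℝ) : 0 ≤ harmB u := Finset.sum_nonneg fun _ _ => by positivity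

lemma tendsto_loglog_floor : Tendsto (fun u : ℝ => Real.log (Real.log ⌊Real.exp u⌋₊) - Real.log u)
    atTop (𝓝 0) := by
  have h1 : Tendsto (fun u : ℝ => (⌊Real.exp u⌋₊ : ℝ) / Real.exp u) atTop (𝓝 1) :=
    (tendsto_nat_floor_div_atTop (R := ℝ)).comp Real.tendsto_exp_atTop
  have h2 := h1.log one_ne_zero
  rw [Real.log_one] at h2
  have h3 : Tendsto (fun u : ℝ => Real.log ((⌊Real.exp u⌋₊ : ℝ) / Real.exp u) * u⁻¹ + 1) atTop (𝓝 1) := by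
    have := (h2.mul tendsto_inv_atTop_zero).add_const 1
    simpa using this
  have h4 := h3.log one_ne_zero
  rw [Real.log_one] at h4
  refine h4.congr' ?_
  filter_upwards [eventually_ge_atTop 1] with u hu
  have hexp : (2 : ℝ) ≤ Real.exp u := by linarith [Real.add_one_le_exp u]
  have hf : 2 ≤ ⌊Real.exp u⌋₊ := Nat.le_floor (by exact_mod_cast hexp)
  have hf' : (2 : ℝ) ≤ ⌊Real.exp u⌋₊ := by exact_mod_cast hf
  rw [Real.log_div (by linarith) (Real.exp_pos u).ne', Real.log_exp]
  have hlog : 0 < Real.log ⌊Real.exp u⌋₊ := Real.log_pos (by linarith)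
  rw [← Real.log_div hlog.ne' (by linarith)]
  congr 1
  field_simp; ring

lemma tendsto_log_floor : Tendsto (fun u : ℝ => Real.log u - Real.log ⌊u⌋₊) atTop (𝓝 0) := by
  have h1 : Tendsto (fun u : ℝ => (⌊u⌋₊ : ℝ) / u) atTop (𝓝 1) := tendsto_nat_floor_div_atTop (R := ℝ)
  have h2 := (h1.log one_ne_zero).neg
  rw [Real.log_one, neg_zero] at h2
  refine h2.congr' ?_
  filter_upwards [eventually_ge_atTop 1] with u hu
  have hf : 1 ≤ ⌊u⌋₊ := Nat.le_floor (by exact_mod_cast hu)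
  have hf' : (1 : ℝ) ≤ ⌊u⌋₊ := by exact_mod_cast hf
  rw [Real.log_div (by linarith) (by linarith)]
  ring

lemma tendsto_h {c : ℝ} (hc : Tendsto (fun N : ℕ =>
    ∑ p ∈ N.primesLE, (-Real.log (1 - 1 / (p : ℝ))) - Real.log (Real.log N)) atTop (𝓝 c)) :
    Tendsto (fun u => primeA u - harmB u) atTop (𝓝 (c - Real.eulerMascheroniConstant)) := by
  have h1 := hc.comp (tendsto_nat_floor_atTop.comp Real.tendsto_exp_atTop)
  have h2 := Real.tendsto_harmonic_sub_log.comp (tendsto_nat_floor_atTop (α := ℝ))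
  have := ((h1.add tendsto_loglog_floor).add tendsto_log_floor).sub h2
  rw [add_zero, add_zero] at this
  refine this.congr fun u => ?_
  simp only [Function.comp, primeA, harmB]
  rw [harmonic]
  push_cast
  simp only [one_div]
  ring

lemma bdd_h {L : ℝ} (hL : Tendsto (fun u => primeA u - harmB u) atTop (𝓝 L)) :
    ∃ M, ∀ u > 0, |primeA u - harmB u| ≤ M := by
  have h1 := (hL.abs).eventually (eventually_le_nhds (lt_add_one |L|))
  obtain ⟨U, hU⟩ := eventually_atTop.mp h1
  refine ⟨max (|L| + 1) (primeA U + harmB U), fun u hu => ?_⟩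
  rcases le_total U u with h | h
  · exact (hU u h).trans (le_max_left _ _)
  · refine le_trans ?_ (le_max_right _ _)
    have := primeA_mono h
    have := harmB_mono h
    have := primeA_nonneg u
    have := harmB_nonneg u
    rw [abs_le]
    constructor <;> linarith

lemma hasSum_h (u : ℝ) (hu : 0 < u) : HasSum (fun i : Nat.Primes ⊕ ℕ =>
    if (Sum.elim (fun p : Nat.Primes => Real.log p) (fun m : ℕ => (m : ℝ) + 1)) i ≤ u then
      (Sum.elim (fun p : Nat.Primes => -Real.log (1 - 1 / (p : ℝ))) (fun m : ℕ => -(1 / ((m : ℝ) + 1)))) i else 0)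
    (primeA u - harmB u) := by
  rw [sub_eq_add_neg]
  refine HasSum.sum ?_ ?_
  · have h : HasSum (fun p : ℕ => if p.Prime ∧ Real.log p ≤ u then -Real.log (1 - 1 / (p : ℝ)) else 0) (primeA u) := by
      have : primeA u = ∑ p ∈ (⌊Real.exp u⌋₊).primesLE,
          (if p.Prime ∧ Real.log p ≤ u then -Real.log (1 - 1 / (p : ℝ)) else 0) := by
        refine Finset.sum_congr rfl fun p hp => ?_
        obtain ⟨h1, h2⟩ := Nat.mem_primesLE.mp hp
        rw [if_pos]
        refine ⟨h2, ?_⟩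
        rw [Real.log_le_iff_le_exp (by exact_mod_cast h2.pos)]
        exact (Nat.le_floor_iff (Real.exp_pos u).le).mp h1
      rw [this]
      apply hasSum_sum_of_ne_finset_zero
      intro p hp
      rw [if_neg]
      rintro ⟨h2, h1⟩
      rw [Real.log_le_iff_le_exp (by exact_mod_cast h2.pos)] at h1
      exact hp (Nat.mem_primesLE.mpr ⟨Nat.le_floor h1, h2⟩)
    rw [← hasSum_subtype_iff_of_support_subset (s := {p : ℕ | p.Prime})] at h
    · refine (congrArg (fun f => HasSum f (primeA u)) ?_).mp h
      ext p
      have hp : Nat.Prime (p : ℕ) := p.2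
      simp [hp]
      rfl
    · intro p hp
      by_contra h3
      exact hp (if_neg fun h4 => h3 h4.1)
  · have : -harmB u = ∑ m ∈ Finset.range ⌊u⌋₊, (if (m : ℝ) + 1 ≤ u then -(1 / ((m : ℝ) + 1)) else 0) := by
      rw [harmB, ← Finset.sum_neg_distrib]
      refine Finset.sum_congr rfl fun m hm => ?_
      rw [if_pos]
      have := (Nat.le_floor_iff hu.le).mp (Nat.succ_le_of_lt (Finset.mem_range.mp hm))
      push_cast at this; exact this
    rw [this]
    apply hasSum_sum_of_ne_finset_zero
    intro m hm
    refine if_neg ?_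
    intro h
    replace h : (m : ℝ) + 1 ≤ u := h
    apply hm
    rw [Finset.mem_range]
    exact Nat.succ_le_iff.mp (Nat.le_floor (by push_cast; exact h))

lemma prime_cast_two_le (p : Nat.Primes) : (2 : ℝ) ≤ ((p : ℕ) : ℝ) := by exact_mod_cast p.2.two_le

lemma summable_primes_sq : Summable (fun p : Nat.Primes => 2 * (1 / ((p : ℕ) : ℝ)) ^ 2) := by
  have := (Nat.Primes.summable_rpow (r := -2)).mpr (by norm_num)
  refine (this.mul_left 2).congr fun p => ?_
  rw [Real.rpow_neg (by positivity)]
  norm_num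

/-- local abbreviation: p^{-1-d} -/
lemma yb (p : Nat.Primes) {d : ℝ} (hd : 0 < d) :
    0 ≤ ((p : ℕ) : ℝ) ^ (-(1 + d)) ∧ ((p : ℕ) : ℝ) ^ (-(1 + d)) ≤ 1 / ((p : ℕ) : ℝ) := by
  have hp := prime_cast_two_le p
  refine ⟨by positivity, ?_⟩
  rw [one_div, ← Real.rpow_neg_one]
  exact Real.rpow_le_rpow_of_exponent_le (by linarith) (by linarith)

lemma yfac (p : Nat.Primes) (d : ℝ) :
    ((p : ℕ) : ℝ) ^ (-(1 + d)) = 1 / ((p : ℕ) : ℝ) * Real.exp (-d * Real.log p) := by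
  have hp := prime_cast_two_le p
  rw [neg_add, Real.rpow_add (by linarith), Real.rpow_neg_one, one_div,
    Real.rpow_def_of_pos (by linarith)]
  congr 2; ring

lemma half (p : Nat.Primes) : 1 / ((p : ℕ) : ℝ) ≤ 1 / 2 :=
  one_div_le_one_div_of_le (by norm_num) (prime_cast_two_le p)

lemma diff_bound (p : Nat.Primes) {d : ℝ} (hd : 0 < d) :
    |(-Real.log (1 - ((p : ℕ) : ℝ) ^ (-(1 + d)))) -
      (-Real.log (1 - 1 / ((p : ℕ) : ℝ))) * Real.exp (-d * Real.log p)| ≤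
      2 * (1 / ((p : ℕ) : ℝ)) ^ 2 := by
  have hp := prime_cast_two_le p
  obtain ⟨h1, h2⟩ := yb p hd
  obtain ⟨a1, a2⟩ := neg_log_sub_bounds h1 (h2.trans (half p))
  obtain ⟨b1, b2⟩ := neg_log_sub_bounds (y := 1 / ((p : ℕ) : ℝ)) (by positivity) (half p)
  have e1 : Real.exp (-d * Real.log p) ≤ 1 := by
    rw [Real.exp_le_one_iff]
    have := Real.log_nonneg (x := ((p : ℕ) : ℝ)) (by linarith)
    nlinarith
  have e0 := (Real.exp_pos (-d * Real.log p)).le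
  have hy := yfac p d
  set y := ((p : ℕ) : ℝ) ^ (-(1 + d))
  set q := 1 / ((p : ℕ) : ℝ)
  set e := Real.exp (-d * Real.log p)
  have c1 : y ^ 2 ≤ q ^ 2 := by gcongr
  have c2 : (-Real.log (1 - q) - q) * e ≤ 2 * q ^ 2 := by nlinarith
  have c3 : 0 ≤ (-Real.log (1 - q) - q) * e := mul_nonneg b1 e0
  have c4 : (-Real.log (1 - y)) - (-Real.log (1 - q)) * e =
    (-Real.log (1 - y) - y) - (-Real.log (1 - q) - q) * e := by rw [hy]; ring
  rw [c4, abs_le]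
  constructor <;> linarith

lemma summable_zeta {d : ℝ} (hd : 0 < d) :
    Summable (fun p : Nat.Primes => -Real.log (1 - ((p : ℕ) : ℝ) ^ (-(1 + d)))) := by
  have hs := (Nat.Primes.summable_rpow (r := -(1 + d))).mpr (by linarith)
  refine Summable.of_nonneg_of_le (fun p => ?_) (fun p => ?_) (hs.mul_left 2)
  · obtain ⟨h1, h2⟩ := yb p hd
    have := (neg_log_sub_bounds h1 (h2.trans (half p))).1
    linarith
  · obtain ⟨h1, h2⟩ := yb p hd
    have := (neg_log_sub_bounds h1 (h2.trans (half p))).2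
    have := h2.trans (half p)
    nlinarith

lemma summable_diff {d : ℝ} (hd : 0 < d) :
    Summable (fun p : Nat.Primes => (-Real.log (1 - ((p : ℕ) : ℝ) ^ (-(1 + d)))) -
      (-Real.log (1 - 1 / ((p : ℕ) : ℝ))) * Real.exp (-d * Real.log p)) :=
  Summable.of_norm_bounded summable_primes_sq fun p => diff_bound p hd

lemma summable_A {d : ℝ} (hd : 0 < d) :
    Summable (fun p : Nat.Primes =>
      (-Real.log (1 - 1 / ((p : ℕ) : ℝ))) * Real.exp (-d * Real.log p)) :=
  ((summable_zeta hd).sub (summable_diff hd)).congr fun p => by ring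

lemma tendsto_diff : Tendsto (fun d : ℝ => ∑' p : Nat.Primes, ((-Real.log (1 - ((p : ℕ) : ℝ) ^ (-(1 + d)))) -
      (-Real.log (1 - 1 / ((p : ℕ) : ℝ))) * Real.exp (-d * Real.log p))) (𝓝[>] 0) (𝓝 0) := by
  have : 𝓝 (0 : ℝ) = 𝓝 (∑' p : Nat.Primes, (0 : ℝ)) := by simp
  rw [this]
  refine tendsto_tsum_of_dominated_convergence summable_primes_sq (fun p => ?_) ?_
  · have hp := prime_cast_two_le p
    have hc : ContinuousAt (fun d : ℝ => (-Real.log (1 - ((p : ℕ) : ℝ) ^ (-(1 + d)))) -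
      (-Real.log (1 - 1 / ((p : ℕ) : ℝ))) * Real.exp (-d * Real.log p)) 0 := by
      have h1 : ContinuousAt (fun d : ℝ => 1 - ((p : ℕ) : ℝ) ^ (-(1 + d))) 0 := by
        refine continuousAt_const.sub ?_
        refine ContinuousAt.rpow continuousAt_const (by fun_prop) (Or.inl (by linarith))
      have h2 := h1.log (by
        have := half p
        rw [add_zero, Real.rpow_neg_one, ← one_div]; linarith)
      exact h2.neg.sub (by fun_prop)
    have := hc.tendsto
    simp only [add_zero, Real.rpow_neg_one, neg_zero, zero_mul, Real.exp_zero, mul_one, one_div, sub_self] at this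
    simp only [one_div]
    exact this.mono_left nhdsWithin_le_nhds
  · filter_upwards [self_mem_nhdsWithin] with d hd p
    exact diff_bound p hd

lemma exp_zeta {d : ℝ} (hd : 0 < d) :
    ((Real.exp (∑' p : Nat.Primes, -Real.log (1 - ((p : ℕ) : ℝ) ^ (-(1 + d)))) : ℝ) : ℂ) =
      riemannZeta ((1 + d : ℝ) : ℂ) := by
  rw [← riemannZeta_eulerProduct_exp_log (by simpa using hd), Complex.ofReal_exp, Complex.ofReal_tsum]
  congr 1
  refine tsum_congr fun p => ?_
  have hp := prime_cast_two_le p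
  obtain ⟨h1, h2⟩ := yb p hd
  have := half p
  rw [Complex.ofReal_neg, Complex.ofReal_log (by linarith), Complex.ofReal_sub,
    Complex.ofReal_cpow (by linarith)]
  simp

lemma tendsto_zeta : Tendsto (fun d : ℝ => d * Real.exp (∑' p : Nat.Primes, -Real.log (1 - ((p : ℕ) : ℝ) ^ (-(1 + d)))))
    (𝓝[>] 0) (𝓝 1) := by
  have h1 : Tendsto (fun d : ℝ => ((1 + d : ℝ) : ℂ)) (𝓝[>] 0) (𝓝[≠] 1) := by
    rw [tendsto_nhdsWithin_iff]
    constructor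
    · have : ContinuousAt (fun d : ℝ => ((1 + d : ℝ) : ℂ)) 0 := by fun_prop
      have := this.tendsto
      simp only [add_zero, Complex.ofReal_one] at this
      exact this.mono_left nhdsWithin_le_nhds
    · filter_upwards [self_mem_nhdsWithin] with d hd
      have hd : 0 < d := hd
      simp [hd.ne']
  have h2 := riemannZeta_residue_one.comp h1
  have h3 := (Complex.continuous_re.tendsto _).comp h2
  rw [Complex.one_re] at h3
  refine h3.congr' ?_
  filter_upwards [self_mem_nhdsWithin] with d hd
  simp only [Function.comp]
  rw [← exp_zeta hd, ← Complex.ofReal_one, ← Complex.ofReal_sub, ← Complex.ofReal_mul, Complex.ofReal_re]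
  ring

lemma tendsto_one_sub_exp : Tendsto (fun d : ℝ => (1 - Real.exp (-d)) / d) (𝓝[>] 0) (𝓝 1) := by
  have h : HasDerivAt (fun d : ℝ => 1 - Real.exp (-d)) 1 0 := by
    have := ((hasDerivAt_neg (0:ℝ)).exp).const_sub 1
    simpa using this
  have := h.tendsto_slope
  refine (this.mono_left (nhdsWithin_mono _ fun x hx => ne_of_gt hx)).congr fun d => ?_
  simp [slope_def_field]

lemma hasSum_harm {d : ℝ} (hd : 0 < d) :
    HasSum (fun m : ℕ => (1 / ((m : ℝ) + 1)) * Real.exp (-d * ((m : ℝ) + 1))) (-Real.log (1 - Real.exp (-d))) := by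
  have h := Real.hasSum_pow_div_log_of_abs_lt_one (x := Real.exp (-d)) (by
    rw [abs_of_pos (Real.exp_pos _), Real.exp_lt_one_iff]; linarith)
  refine (congrArg (fun f => HasSum f _) ?_).mp h
  ext m
  rw [← Real.exp_nat_mul]
  push_cast
  rw [show ((m : ℝ) + 1) * -d = -d * ((m : ℝ) + 1) by ring]
  ring

theorem mertens_const {c : ℝ} (hc : Tendsto (fun N : ℕ =>
    ∑ p ∈ N.primesLE, (-Real.log (1 - 1 / (p : ℝ))) - Real.log (Real.log N)) atTop (𝓝 c)) :
    c = Real.eulerMascheroniConstant := by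
  have hL := tendsto_h hc
  obtain ⟨M, hM⟩ := bdd_h hL
  have hm : Measurable (fun u => primeA u - harmB u) :=
    primeA_mono.measurable.sub harmB_mono.measurable
  have T1 := laplace_tendsto _ hm hM hL
  have T2 : Tendsto (fun d : ℝ => ∫ u in Set.Ioi (0:ℝ), d * Real.exp (-d * u) * (primeA u - harmB u))
      (𝓝[>] 0) (𝓝 0) := by
    have hlog := ((tendsto_zeta.mul tendsto_one_sub_exp).log (by norm_num)).sub tendsto_diff
    rw [mul_one, Real.log_one, sub_zero] at hlog
    refine hlog.congr' ?_
    filter_upwards [self_mem_nhdsWithin] with d hd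
    have hd : 0 < d := hd
    have hab := abel_laplace
      (Sum.elim (fun p : Nat.Primes => -Real.log (1 - 1 / (p : ℝ))) (fun m : ℕ => -(1 / ((m : ℝ) + 1))))
      (Sum.elim (fun p : Nat.Primes => Real.log p) (fun m : ℕ => (m : ℝ) + 1)) ?_ hd ?_ _ hasSum_h
    · have h2 : HasSum (fun i : Nat.Primes ⊕ ℕ =>
        (Sum.elim (fun p : Nat.Primes => -Real.log (1 - 1 / (p : ℝ))) (fun m : ℕ => -(1 / ((m : ℝ) + 1)))) i *
        Real.exp (-d * (Sum.elim (fun p : Nat.Primes => Real.log p) (fun m : ℕ => (m : ℝ) + 1)) i))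
        ((∑' p : Nat.Primes, (-Real.log (1 - 1 / ((p : ℕ) : ℝ))) * Real.exp (-d * Real.log p)) +
          Real.log (1 - Real.exp (-d))) := by
        refine HasSum.sum ?_ ?_
        · exact (summable_A hd).hasSum
        · have := (hasSum_harm hd).neg
          rw [neg_neg] at this
          refine (congrArg (fun f => HasSum f _) ?_).mp this
          ext m
          simp
      rw [hab.unique h2, (summable_zeta hd).tsum_sub (summable_A hd)]
      have hE : 0 < 1 - Real.exp (-d) := by
        rw [sub_pos, Real.exp_lt_one_iff]; linarith
      rw [show ∀ E : ℝ, d * E * ((1 - Real.exp (-d)) / d) = E * (1 - Real.exp (-d)) from fun E => by field_simp,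
        Real.log_mul (Real.exp_pos _).ne' hE.ne', Real.log_exp]
      ring
    · rintro (p | m)
      · exact Real.log_pos (by linarith [prime_cast_two_le p])
      · simp only [Sum.elim_inr]; positivity
    · refine (HasSum.sum (a := ∑' p : Nat.Primes, (-Real.log (1 - 1 / ((p : ℕ) : ℝ))) * Real.exp (-d * Real.log p))
        (b := -Real.log (1 - Real.exp (-d))) ?_ ?_).summable
      · refine (congrArg (fun f => HasSum f _) ?_).mp (summable_A hd).hasSum
        ext p
        simp only [Function.comp, Sum.elim_inl]
        rw [abs_of_nonneg (neg_log_prime_nonneg p.2)]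
      · refine (congrArg (fun f => HasSum f _) ?_).mp (hasSum_harm hd)
        ext m
        simp only [Function.comp, Sum.elim_inr]
        rw [abs_neg, abs_of_nonneg (by positivity)]
  have := tendsto_nhds_unique T1 T2
  linarith

/-- Mertens' third theorem. -/
theorem mertens_three : Tendsto (fun N : ℕ => (∏ p ∈ N.primesLE, (1 - 1 / (p : ℝ))) * Real.log N) atTop
    (𝓝 (Real.exp (-Real.eulerMascheroniConstant))) := by
  obtain ⟨c, hc⟩ := exists_lim_neg_log
  rw [mertens_const hc] at hc
  have h := (Real.continuous_exp.tendsto _).comp hc.neg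
  refine h.congr' ?_
  filter_upwards [eventually_ge_atTop 2] with N hN
  have hN' : (2 : ℝ) ≤ N := by exact_mod_cast hN
  have hl : 0 < Real.log N := Real.log_pos (by linarith)
  simp only [Function.comp]
  rw [neg_sub, sub_eq_add_neg, Real.exp_add, Real.exp_log hl, ← Finset.sum_neg_distrib, Real.exp_sum, mul_comm]
  congr 1
  refine Finset.prod_congr rfl fun p hp => ?_
  have hp2 : (2 : ℝ) ≤ p := by exact_mod_cast (Nat.mem_primesLE.mp hp).2.two_le
  have : 1 / (p : ℝ) ≤ 1 / 2 := one_div_le_one_div_of_le (by norm_num) hp2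
  rw [neg_neg, Real.exp_log (by linarith)]
lemma card_preimage_hom {G H : Type*} [AddCommGroup G] [AddCommGroup H] [Finite G] [Finite H] (f : G →+ H)
    (hf : Function.Surjective f) (P : H → Prop) :
    Nat.card {x : G // P (f x)} * Nat.card H = Nat.card G * Nat.card {y : H // P y} := by
  classical
  have e : G ≃ H × f.ker :=
    (AddSubgroup.addGroupEquivQuotientProdAddSubgroup (s := f.ker)).trans
      (Equiv.prodCongr (QuotientAddGroup.quotientKerEquivOfSurjective f hf).toEquiv (Equiv.refl _))
  have hG : Nat.card G = Nat.card H * Nat.card f.ker := by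
    rw [Nat.card_congr e, Nat.card_prod]
  let g := Function.surjInv hf
  have hg : ∀ y, f (g y) = y := Function.surjInv_eq hf
  let e2 : {x : G // P (f x)} ≃ {y : H // P y} × f.ker :=
    { toFun := fun x => (⟨f x.1, x.2⟩, ⟨x.1 - g (f x.1), by simp [AddMonoidHom.mem_ker, hg]⟩)
      invFun := fun z => ⟨g z.1.1 + z.2.1, by
        have := z.2.2
        rw [AddMonoidHom.mem_ker] at this
        simpa [hg, this] using z.1.2⟩
      left_inv := fun x => by simp
      right_inv := fun z => by
        have := z.2.2
        rw [AddMonoidHom.mem_ker] at this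
        ext <;> simp [hg, this] }
  rw [Nat.card_congr e2, Nat.card_prod, hG]
  ring

/-- number of zeros of the hyperbolic form -/
lemma card_hyperbolic {F : Type*} [Field F] [Fintype F] {ι : Type*} [Fintype ι] [Nonempty ι] :
    Nat.card {z : (ι → F) × (ι → F) // ∑ i, z.1 i * z.2 i = 0} * Nat.card F + Nat.card F ^ (Fintype.card ι) =
      Nat.card F ^ (2 * Fintype.card ι) + Nat.card F ^ (Fintype.card ι + 1) := by
  classical
  set q := Nat.card F with hq
  set r := Fintype.card ι with hr
  have hcard : Nat.card (ι → F) = q ^ r := by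
    rw [Nat.card_fun, Nat.card_eq_fintype_card (α := ι)]
  let e : {z : (ι → F) × (ι → F) // ∑ i, z.1 i * z.2 i = 0} ≃
      (Σ y : ι → F, {z : ι → F // ∑ i, y i * z i = 0}) :=
    { toFun := fun z => ⟨z.1.1, z.1.2, z.2⟩
      invFun := fun z => ⟨(z.1, z.2.1), z.2.2⟩
      left_inv := fun _ => rfl
      right_inv := fun _ => rfl }
  have hfib : ∀ y : ι → F, Nat.card {z : ι → F // ∑ i, y i * z i = 0} * q =
      if y = 0 then q ^ (r + 1) else q ^ r := by
    intro y
    split_ifs with hy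
    · subst hy
      have : Nat.card {z : ι → F // ∑ i, (0 : ι → F) i * z i = 0} = q ^ r := by
        rw [← hcard]
        exact Nat.card_congr (Equiv.subtypeUnivEquiv fun z => by simp)
      rw [this, pow_succ]
    · obtain ⟨j, hj⟩ : ∃ j, y j ≠ 0 := by
        by_contra h; push Not at h; exact hy (funext h)
      let f : (ι → F) →+ F :=
        { toFun := fun z => ∑ i, y i * z i
          map_zero' := by simp
          map_add' := fun a b => by simp [mul_add, Finset.sum_add_distrib] }
      have hsurj : Function.Surjective f := by
        intro c
        refine ⟨Pi.single j ((y j)⁻¹ * c), ?_⟩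
        change ∑ i, y i * (Pi.single j ((y j)⁻¹ * c) : ι → F) i = c
        rw [Finset.sum_eq_single j]
        · simp [hj]
        · intro b _ hb; simp [hb]
        · simp
      have := card_preimage_hom f hsurj (fun c => c = 0)
      have h1 : Nat.card {y : F // y = 0} = 1 := by simp
      rw [h1, mul_one, hcard] at this
      exact this
  rw [Nat.card_congr e, Nat.card_sigma, Finset.sum_mul]
  simp only [hfib]
  rw [Finset.sum_ite, Finset.sum_const, Finset.sum_const]
  have h1 : (Finset.univ.filter (fun y : ι → F => y = 0)).card = 1 :=
    Finset.card_eq_one.mpr ⟨0, by ext; rw [Finset.mem_filter]; simp⟩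
  have h2 : (Finset.univ.filter (fun y : ι → F => ¬ y = 0)).card + 1 = q ^ r := by
    rw [← hcard, Nat.card_eq_fintype_card, ← Finset.card_univ (α := ι → F),
      ← Finset.card_filter_add_card_filter_not (s := Finset.univ) (fun y : ι → F => y = 0), h1, add_comm]
  rw [h1, one_smul, smul_eq_mul, two_mul, pow_add]
  generalize (Finset.univ.filter (fun y : ι → F => ¬ y = 0)).card = c at h2
  have h3 : c * q ^ r + q ^ r = q ^ r * q ^ r := by
    rw [← h2]; ring
  rw [add_assoc, h3, add_comm, pow_add]

lemma card_four {p : ℕ} [hp : Fact p.Prime] (hp2 : p ≠ 2) (m : ℕ) (hm : 0 < m) :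
    Nat.card {x : Fin (4 * m) → ZMod p // ∑ i, x i ^ 2 = 0} * p + p ^ (2 * m) =
      p ^ (4 * m) + p ^ (2 * m + 1) := by
  obtain ⟨a, b, hab⟩ := ZMod.sq_add_sq p (-1)
  have h2 : (2 : ZMod p) ≠ 0 := by
    have := Fact.mk (hp.out.odd_of_ne_two hp2)
    intro h
    have h' : ((2 : ℕ) : ZMod p) = 0 := by exact_mod_cast h
    rw [ZMod.natCast_eq_zero_iff] at h'
    exact hp2 ((Nat.prime_dvd_prime_iff_eq hp.out Nat.prime_two).mp h')
  set t : ZMod p := (2 : ZMod p)⁻¹ with ht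
  have htt : 2 * t = 1 := mul_inv_cancel₀ h2
  -- block equivalence
  let B : (Fin 4 → ZMod p) ≃ (Fin 2 → ZMod p) × (Fin 2 → ZMod p) :=
    { toFun := fun x => (![x 0 + (a * x 2 + b * x 3), x 1 + (b * x 2 - a * x 3)],
        ![x 0 - (a * x 2 + b * x 3), x 1 - (b * x 2 - a * x 3)])
      invFun := fun z => ![t * (z.1 0 + z.2 0), t * (z.1 1 + z.2 1),
        -(a * (t * (z.1 0 - z.2 0)) + b * (t * (z.1 1 - z.2 1))),
        -(b * (t * (z.1 0 - z.2 0)) - a * (t * (z.1 1 - z.2 1)))]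
      left_inv := fun x => by
        ext i
        fin_cases i
        · simp; linear_combination (x 0) * htt
        · simp; linear_combination (x 1) * htt
        · simp; linear_combination (-(a^2+b^2) * x 2) * htt - x 2 * hab
        · simp; linear_combination (-(a^2+b^2) * x 3) * htt - x 3 * hab
      right_inv := fun z => by
        ext i
        · fin_cases i
          · simp; linear_combination (z.1 0) * htt - t * (z.1 0 - z.2 0) * hab
          · simp; linear_combination (z.1 1) * htt - t * (z.1 1 - z.2 1) * hab
        · fin_cases i
          · simp; linear_combination (z.2 0) * htt + t * (z.1 0 - z.2 0) * hab
          · simp; linear_combination (z.2 1) * htt + t * (z.1 1 - z.2 1) * hab }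
  have hB : ∀ x : Fin 4 → ZMod p, ∑ i, x i ^ 2 = ∑ j, (B x).1 j * (B x).2 j := by
    intro x
    simp [B, Fin.sum_univ_four, Fin.sum_univ_two]
    linear_combination (-(x 2)^2 - (x 3)^2) * (-hab)
  let E : (Fin (4 * m) → ZMod p) ≃ (Fin 2 × Fin m → ZMod p) × (Fin 2 × Fin m → ZMod p) :=
    ((finProdFinEquiv (m := 4) (n := m)).arrowCongr (Equiv.refl (ZMod p))).symm.trans
      { toFun := fun x => (fun jk => (B fun i => x (i, jk.2)).1 jk.1, fun jk => (B fun i => x (i, jk.2)).2 jk.1)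
        invFun := fun z => fun ik => B.symm (fun j => z.1 (j, ik.2), fun j => z.2 (j, ik.2)) ik.1
        left_inv := fun x => by
          ext ik
          simp
        right_inv := fun z => by
          ext ik <;> simp }
  have hE : ∀ x : Fin (4 * m) → ZMod p, ∑ i, x i ^ 2 = ∑ jk, (E x).1 jk * (E x).2 jk := by
    intro x
    rw [← finProdFinEquiv.sum_comp, Fintype.sum_prod_type_right, Fintype.sum_prod_type_right]
    refine Finset.sum_congr rfl fun k _ => ?_
    exact hB (fun i => x (finProdFinEquiv (i, k)))
  have hc : Nat.card {x : Fin (4 * m) → ZMod p // ∑ i, x i ^ 2 = 0} =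
      Nat.card {z : (Fin 2 × Fin m → ZMod p) × (Fin 2 × Fin m → ZMod p) // ∑ i, z.1 i * z.2 i = 0} :=
    Nat.card_congr (E.subtypeEquiv fun x => by rw [hE])
  have : Nonempty (Fin m) := ⟨⟨0, hm⟩⟩
  have := card_hyperbolic (F := ZMod p) (ι := Fin 2 × Fin m)
  rw [← hc] at this
  simp only [Nat.card_zmod, Fintype.card_prod, Fintype.card_fin] at this
  rw [this]
  ring

lemma genTotient_prime_odd {p : ℕ} (hp : p.Prime) (hp2 : p ≠ 2) (m : ℕ) (hm : 0 < m) :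
    (genTotient (4 * m) p : ℝ) / (p : ℝ) ^ (4 * m) = (1 - 1 / (p : ℝ)) * (1 - 1 / (p : ℝ) ^ (2 * m)) := by
  have := Fact.mk hp
  have h := card_four hp2 m hm
  have h1 : genTotient (4 * m) p + Nat.card {x : Fin (4 * m) → ZMod p // ∑ i, x i ^ 2 = 0} = p ^ (4 * m) := by
    classical
    rw [genTotient, Nat.card_eq_fintype_card, Nat.card_eq_fintype_card]
    simp only [isUnit_iff_ne_zero, ne_eq]
    rw [Fintype.card_subtype_compl, Nat.sub_add_cancel (Fintype.card_subtype_le _)]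
    simp [ZMod.card]
  have h' : (Nat.card {x : Fin (4 * m) → ZMod p // ∑ i, x i ^ 2 = 0} : ℝ) * p + p ^ (2 * m) =
      p ^ (4 * m) + p ^ (2 * m + 1) := by exact_mod_cast h
  have h1' : (genTotient (4 * m) p : ℝ) + Nat.card {x : Fin (4 * m) → ZMod p // ∑ i, x i ^ 2 = 0} = p ^ (4 * m) := by
    exact_mod_cast h1
  have hp0 : (p : ℝ) ≠ 0 := by exact_mod_cast hp.ne_zero
  have e4 : (p : ℝ) ^ (4 * m) = p ^ (2 * m) * p ^ (2 * m) := by rw [← pow_add]; congr 1; ring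
  have hg : (genTotient (4 * m) p : ℝ) * p = (p ^ (2 * m) * p ^ (2 * m)) * p - p ^ (2 * m) * p ^ (2 * m) - p ^ (2 * m) * p + p ^ (2 * m) := by
    rw [e4] at h' h1'
    rw [pow_succ] at h'
    linear_combination (p : ℝ) * h1' - h'
  rw [e4]
  have hP : (p : ℝ) ^ (2 * m) ≠ 0 := pow_ne_zero _ hp0
  set P := (p : ℝ) ^ (2 * m)
  field_simp
  linear_combination hg

lemma genTotient_two (k : ℕ) (hk : 0 < k) :
    (genTotient k 2 : ℝ) / (2 : ℝ) ^ k = 1 - 1 / 2 := by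
  let f : (Fin k → ZMod 2) →+ ZMod 2 :=
    { toFun := fun x => ∑ i, x i
      map_zero' := by simp
      map_add' := fun a b => by simp [Finset.sum_add_distrib] }
  have hf : Function.Surjective f := by
    intro c
    refine ⟨Pi.single ⟨0, hk⟩ c, ?_⟩
    change ∑ i, (Pi.single (⟨0, hk⟩ : Fin k) c : Fin k → ZMod 2) i = c
    simp
  have h := card_preimage_hom f hf (fun y => IsUnit y)
  have h1 : Nat.card {y : ZMod 2 // IsUnit y} = 1 := by
    simp only [isUnit_iff_ne_zero]
    rw [Nat.card_eq_fintype_card]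
    decide
  have hg : genTotient k 2 = Nat.card {x : Fin k → ZMod 2 // IsUnit (f x)} := by
    rw [genTotient]
    congr 2
    ext x
    have : ∑ i, x i ^ 2 = f x := by
      change _ = ∑ i, x i
      refine Finset.sum_congr rfl fun i _ => ?_
      exact ZMod.pow_card (p := 2) (x i)
    rw [this]
  rw [← hg, h1, mul_one, Nat.card_zmod, Nat.card_fun, Nat.card_zmod, Nat.card_eq_fintype_card,
    Fintype.card_fin] at h
  have h' : (genTotient k 2 : ℝ) * 2 = 2 ^ k := by exact_mod_cast h
  rw [← h']
  have : (genTotient k 2 : ℝ) ≠ 0 := by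
    intro h0; rw [h0] at h'; simp at h'
    have : (0:ℝ) < 2 ^ k := by positivity
    linarith
  field_simp; norm_num

lemma genTotient_eq_prod (k n : ℕ) (hn : n ≠ 0) :
    (genTotient k n : ℝ) / (n : ℝ) ^ k = ∏ p ∈ n.primeFactors, ((genTotient k p : ℝ) / (p : ℝ) ^ k) := by
  have : NeZero n := ⟨hn⟩
  have hpr : ∀ p : n.primeFactors, (p : ℕ).Prime := fun p => Nat.prime_of_mem_primeFactors p.2
  have : ∀ p : n.primeFactors, NeZero (p : ℕ) := fun p => ⟨(hpr p).ne_zero⟩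
  have hcop : Pairwise (Function.onFun Nat.Coprime (fun p : n.primeFactors => (p : ℕ))) := by
    intro p q hpq
    exact (Nat.coprime_primes (hpr p) (hpr q)).mpr fun h => hpq (Subtype.ext h)
  have hdvd : (∏ p : n.primeFactors, (p : ℕ)) ∣ n := by
    rw [Finset.prod_coe_sort n.primeFactors (fun p => p)]
    exact Nat.prod_primeFactors_dvd n
  let φ : ZMod n →+* (∀ p : n.primeFactors, ZMod p) :=
    (ZMod.prodEquivPi _ hcop).toRingHom.comp (ZMod.castHom hdvd _)
  have hφ : Function.Surjective φ :=
    (ZMod.prodEquivPi _ hcop).surjective.comp (ZMod.castHom_surjective hdvd)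
  have hunit : ∀ x : ZMod n, IsUnit x ↔ ∀ p, IsUnit (φ x p) := by
    intro x
    constructor
    · intro h p
      exact Pi.isUnit_iff.mp (h.map φ) p
    · intro h
      have hx : ((x.val : ℕ) : ZMod n) = x := ZMod.natCast_zmod_val x
      rw [← hx, ZMod.isUnit_iff_coprime]
      refine Nat.Coprime.symm (Nat.coprime_of_dvd fun p hp hpn hpx => ?_)
      have := h ⟨p, Nat.mem_primeFactors.mpr ⟨hp, hpn, hn⟩⟩
      rw [← hx, map_natCast, Pi.natCast_apply, ZMod.isUnit_iff_coprime] at this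
      have h3 := Nat.Coprime.eq_one_of_dvd this.symm hpx
      exact hp.one_lt.ne' h3
  let f : (Fin k → ZMod n) →+ (∀ p : n.primeFactors, Fin k → ZMod p) :=
    { toFun := fun x p i => φ (x i) p
      map_zero' := by ext; simp
      map_add' := fun a b => by ext; simp }
  have hf : Function.Surjective f := by
    intro y
    choose g hg using hφ
    refine ⟨fun i => g fun p => y p i, ?_⟩
    ext p i
    change φ (g fun p => y p i) p = _
    rw [hg]
  have h := card_preimage_hom f hf (fun y => ∀ p, IsUnit (∑ i, y p i ^ 2))
  have hg : genTotient k n = Nat.card {x : Fin k → ZMod n // ∀ p, IsUnit (∑ i, f x p i ^ 2)} := by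
    rw [genTotient]
    congr 2
    ext x
    rw [hunit]
    refine forall_congr' fun p => ?_
    rw [map_sum, Finset.sum_apply]
    simp only [map_pow, Pi.pow_apply]
    rfl
  have hr : Nat.card {y : ∀ p : n.primeFactors, Fin k → ZMod p // ∀ p, IsUnit (∑ i, y p i ^ 2)} =
      ∏ p : n.primeFactors, genTotient k p := by
    rw [Nat.card_congr (Equiv.subtypePiEquivPi (p := fun {p} (y : Fin k → ZMod (p : n.primeFactors)) => IsUnit (∑ i, y i ^ 2))), Nat.card_pi]
    rfl
  rw [← hg, hr, Nat.card_pi] at h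
  simp only [Nat.card_fun, Nat.card_zmod, Nat.card_eq_fintype_card (α := Fin k), Fintype.card_fin] at h
  rw [Finset.prod_coe_sort n.primeFactors (fun p => p ^ k), Finset.prod_coe_sort n.primeFactors (fun p => genTotient k p)] at h
  have h' : (genTotient k n : ℝ) * ∏ p ∈ n.primeFactors, (p : ℝ) ^ k =
    (n : ℝ) ^ k * ∏ p ∈ n.primeFactors, (genTotient k p : ℝ) := by exact_mod_cast h
  rw [Finset.prod_div_distrib, div_eq_div_iff, h', mul_comm]
  · positivity
  · refine Finset.prod_ne_zero_iff.mpr fun p hp => ?_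
    have := (Nat.prime_of_mem_primeFactors hp).ne_zero
    positivity

lemma prod_le_prod_of_subset01 {S T : Finset ℕ} (hTS : T ⊆ S) (f : ℕ → ℝ) (h0 : ∀ p ∈ S, 0 ≤ f p)
    (h1 : ∀ p ∈ S, f p ≤ 1) : ∏ p ∈ S, f p ≤ ∏ p ∈ T, f p := by
  rw [← Finset.prod_sdiff hTS]
  have ha : ∏ p ∈ S \ T, f p ≤ 1 :=
    Finset.prod_le_one (fun p hp => h0 p (Finset.mem_sdiff.mp hp).1) (fun p hp => h1 p (Finset.mem_sdiff.mp hp).1)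
  have hb : 0 ≤ ∏ p ∈ T, f p := Finset.prod_nonneg fun p hp => h0 p (hTS hp)
  nlinarith

/-- the odd local factor -/
noncomputable def gfac (m p : ℕ) : ℝ := if p = 2 then 1 else 1 - 1 / (p : ℝ) ^ (2 * m)

lemma gfac_bounds (m : ℕ) {p : ℕ} (hp : p.Prime) : 0 ≤ gfac m p ∧ gfac m p ≤ 1 := by
  have h1 : (1 : ℝ) ≤ p := by exact_mod_cast hp.one_le
  have h2 : (1 : ℝ) ≤ (p : ℝ) ^ (2 * m) := one_le_pow₀ h1
  have h3 : 1 / (p : ℝ) ^ (2 * m) ≤ 1 := by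
    rw [div_le_one (by linarith)]; exact h2
  have h4 : 0 ≤ 1 / (p : ℝ) ^ (2 * m) := by positivity
  unfold gfac
  split_ifs
  · norm_num
  · constructor <;> linarith

lemma inv_bounds {p : ℕ} (hp : p.Prime) : 0 ≤ 1 - 1 / (p : ℝ) ∧ 1 - 1 / (p : ℝ) ≤ 1 := by
  have h1 : (1 : ℝ) ≤ p := by exact_mod_cast hp.one_le
  have h3 : 1 / (p : ℝ) ≤ 1 := by
    rw [div_le_one (by linarith)]; exact h1
  have h4 : 0 ≤ 1 / (p : ℝ) := by positivity
  constructor <;> linarith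

lemma density_eq (m : ℕ) (hm : 0 < m) (n : ℕ) (hn : n ≠ 0) :
    (genTotient (4 * m) n : ℝ) / (n : ℝ) ^ (4 * m) =
      (∏ p ∈ n.primeFactors, (1 - 1 / (p : ℝ))) * ∏ p ∈ n.primeFactors, gfac m p := by
  rw [genTotient_eq_prod _ _ hn, ← Finset.prod_mul_distrib]
  refine Finset.prod_congr rfl fun p hp => ?_
  have hp := Nat.prime_of_mem_primeFactors hp
  unfold gfac
  split_ifs with h
  · subst h
    have := genTotient_two (4 * m) (by omega)
    rw [mul_one]
    exact_mod_cast this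
  · exact genTotient_prime_odd hp h m hm

lemma tendsto_gfac (m : ℕ) (hm : 0 < m) : ∃ C : ℝ,
    Tendsto (fun N : ℕ => ∏ p ∈ N.primesLE, gfac m p) atTop (𝓝 C) ∧
    (C : ℂ) = (2 : ℂ) ^ (2 * m) / ((2 : ℂ) ^ (2 * m) - 1) * (riemannZeta (2 * m : ℕ))⁻¹ := by
  have hre : 1 < ((2 * m : ℕ) : ℂ).re := by
    rw [Complex.natCast_re]; exact_mod_cast (by omega)
  have h1 := riemannZeta_eulerProduct hre
  have hz := riemannZeta_ne_zero_of_one_lt_re hre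
  have h2 := (h1.inv₀ hz).comp (tendsto_add_atTop_nat 1)
  have h4 : (2 : ℂ) ^ (2 * m) ≠ 0 := pow_ne_zero _ two_ne_zero
  have h5 : (2 : ℂ) ^ (2 * m) - 1 ≠ 0 := by
    have : (1 : ℕ) < 2 ^ (2 * m) := Nat.one_lt_two_pow (by omega)
    rw [sub_ne_zero]
    exact_mod_cast this.ne'
  have h3 := h2.const_mul ((2 : ℂ) ^ (2 * m) / ((2 : ℂ) ^ (2 * m) - 1))
  set z := (2 : ℂ) ^ (2 * m) / ((2 : ℂ) ^ (2 * m) - 1) * (riemannZeta (2 * m : ℕ))⁻¹ with hzdef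
  have h6 : Tendsto (fun N : ℕ => ((∏ p ∈ N.primesLE, gfac m p : ℝ) : ℂ)) atTop (𝓝 z) := by
    refine h3.congr' ?_
    filter_upwards [eventually_ge_atTop 2] with N hN
    simp only [Function.comp]
    have hmem : 2 ∈ N.primesLE := Nat.mem_primesLE.mpr ⟨hN, Nat.prime_two⟩
    change _ * (∏ p ∈ N.primesLE, _)⁻¹ = _
    rw [← Finset.prod_inv_distrib, Complex.ofReal_prod, ← Finset.mul_prod_erase _ _ hmem,
      ← Finset.mul_prod_erase _ (fun p => ((gfac m p : ℝ) : ℂ)) hmem, ← mul_assoc]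
    congr 1
    · simp only [gfac, if_true, inv_inv, Complex.cpow_neg, Complex.cpow_natCast]
      push_cast
      field_simp
    · refine Finset.prod_congr rfl fun p hp => ?_
      have hp2 : p ≠ 2 := (Finset.mem_erase.mp hp).1
      simp only [gfac, if_neg hp2, inv_inv, Complex.cpow_neg, Complex.cpow_natCast]
      push_cast
      simp
  have h7 : Tendsto (fun N : ℕ => ∏ p ∈ N.primesLE, gfac m p) atTop (𝓝 z.re) :=
    ((Complex.continuous_re.tendsto z).comp h6).congr fun N => by simp only [Function.comp, Complex.ofReal_re]
  refine ⟨z.re, h7, ?_⟩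
  exact tendsto_nhds_unique ((Complex.continuous_ofReal.tendsto _).comp h7) h6

lemma le_prod_gfac {m : ℕ} {C : ℝ} (hC : Tendsto (fun N : ℕ => ∏ p ∈ N.primesLE, gfac m p) atTop (𝓝 C))
    (n : ℕ) : C ≤ ∏ p ∈ n.primeFactors, gfac m p := by
  refine le_of_tendsto hC ?_
  filter_upwards [eventually_ge_atTop n] with N hN
  refine prod_le_prod_of_subset01 ?_ _ (fun p hp => (gfac_bounds m (Nat.mem_primesLE.mp hp).2).1)
    (fun p hp => (gfac_bounds m (Nat.mem_primesLE.mp hp).2).2)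
  intro p hp
  have hn : n ≠ 0 := by rintro rfl; simp at hp
  exact Nat.mem_primesLE.mpr ⟨(Nat.le_of_mem_primeFactors hp).trans hN, Nat.prime_of_mem_primeFactors hp⟩

noncomputable def mprod (N : ℕ) : ℝ := ∏ p ∈ N.primesLE, (1 - 1 / (p : ℝ))

lemma mprod_nonneg (N : ℕ) : 0 ≤ mprod N :=
  Finset.prod_nonneg fun _ hp => (inv_bounds (Nat.mem_primesLE.mp hp).2).1

lemma tendsto_mprod_zero : Tendsto mprod atTop (𝓝 0) := by
  have h1 : Tendsto (fun N : ℕ => (Real.log N)⁻¹) atTop (𝓝 0) :=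
    (Real.tendsto_log_atTop.comp tendsto_natCast_atTop_atTop).inv_tendsto_atTop
  have := mertens_three.mul h1
  rw [mul_zero] at this
  refine this.congr' ?_
  filter_upwards [eventually_ge_atTop 2] with N hN
  have hN' : (2 : ℝ) ≤ N := by exact_mod_cast hN
  have hl : 0 < Real.log N := Real.log_pos (by linarith)
  rw [mul_inv_cancel_right₀ hl.ne']; rfl

lemma prod_inv_lower (n : ℕ) (hn : n ≠ 0) (hx : Real.exp 1 ≤ Real.log n) :
    mprod ⌊Real.log n⌋₊ * (1 - 1 / Real.log (Real.log n)) ≤ ∏ p ∈ n.primeFactors, (1 - 1 / (p : ℝ)) := by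
  set x := Real.log n with hxdef
  have he : (2 : ℝ) ≤ Real.exp 1 := by linarith [Real.add_one_le_exp (1:ℝ)]
  have hx0 : 0 < x := by linarith
  have hlx : 1 ≤ Real.log x := (Real.le_log_iff_exp_le hx0).mpr hx
  rw [← Finset.prod_filter_mul_prod_filter_not n.primeFactors (fun p => p ≤ ⌊x⌋₊)]
  have hpr : ∀ p ∈ n.primeFactors, p.Prime := fun p hp => Nat.prime_of_mem_primeFactors hp
  have hA : mprod ⌊x⌋₊ ≤ ∏ p ∈ n.primeFactors.filter (fun p => p ≤ ⌊x⌋₊), (1 - 1 / (p : ℝ)) := by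
    refine prod_le_prod_of_subset01 ?_ _ (fun p hp => (inv_bounds (Nat.mem_primesLE.mp hp).2).1)
      (fun p hp => (inv_bounds (Nat.mem_primesLE.mp hp).2).2)
    intro p hp
    rw [Finset.mem_filter] at hp
    exact Nat.mem_primesLE.mpr ⟨hp.2, hpr p hp.1⟩
  set T := n.primeFactors.filter (fun p => ¬ p ≤ ⌊x⌋₊) with hT
  have hTx : ∀ p ∈ T, x ≤ (p : ℝ) := by
    intro p hp
    rw [hT, Finset.mem_filter, not_le] at hp
    exact ((Nat.floor_lt hx0.le).mp hp.2).le
  have hcard : (T.card : ℝ) * Real.log x ≤ x := by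
    have h1 : x ^ T.card ≤ (n : ℝ) := by
      calc x ^ T.card = ∏ p ∈ T, x := by rw [Finset.prod_const]
        _ ≤ ∏ p ∈ T, (p : ℝ) := Finset.prod_le_prod (fun _ _ => hx0.le) hTx
        _ = ((∏ p ∈ T, p : ℕ) : ℝ) := by push_cast; rfl
        _ ≤ n := by
          have hd : (∏ p ∈ T, p) ∣ n :=
            (Finset.prod_dvd_prod_of_subset _ _ _ (Finset.filter_subset _ _)).trans (Nat.prod_primeFactors_dvd n)
          exact_mod_cast Nat.le_of_dvd (Nat.pos_of_ne_zero hn) hd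
    have h2 := Real.log_le_log (by positivity) h1
    rwa [Real.log_pow] at h2
  have hB : 1 - 1 / Real.log x ≤ ∏ p ∈ T, (1 - 1 / (p : ℝ)) := by
    have hx1 : 1 / x ≤ 1 := by rw [div_le_one hx0]; linarith
    calc 1 - 1 / Real.log x ≤ 1 + (T.card : ℝ) * (-(1 / x)) := by
          have : (T.card : ℝ) * (1 / x) ≤ 1 / Real.log x := by
            rw [mul_one_div, div_le_div_iff₀ hx0 (by linarith)]; linarith
          linarith
      _ ≤ (1 + -(1 / x)) ^ T.card := one_add_mul_le_pow (by linarith) _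
      _ = ∏ p ∈ T, (1 + -(1 / x)) := by rw [Finset.prod_const]
      _ ≤ _ := by
        refine Finset.prod_le_prod (fun _ _ => by linarith) fun p hp => ?_
        have := one_div_le_one_div_of_le hx0 (hTx p hp)
        linarith
  have h0 : 0 ≤ 1 - 1 / Real.log x := by
    have : 1 / Real.log x ≤ 1 := by rw [div_le_one (by linarith)]; exact hlx
    linarith
  exact mul_le_mul hA hB h0 ((mprod_nonneg _).trans hA)

lemma tendsto_lower : Tendsto (fun x : ℝ => mprod ⌊x⌋₊ * (1 - 1 / Real.log x) * Real.log x) atTop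
    (𝓝 (Real.exp (-Real.eulerMascheroniConstant))) := by
  have h1 := mertens_three.comp (tendsto_nat_floor_atTop (α := ℝ))
  have h2 := (tendsto_mprod_zero.comp (tendsto_nat_floor_atTop (α := ℝ))).mul tendsto_log_floor
  have h3 : Tendsto (fun x : ℝ => 1 - 1 / Real.log x) atTop (𝓝 1) := by
    have := (Real.tendsto_log_atTop.inv_tendsto_atTop).const_sub 1
    simpa using this
  have := (h1.add h2).mul h3
  simp only [mul_zero, add_zero, mul_one] at this
  refine this.congr fun x => ?_
  simp only [Function.comp, mprod]
  ring

lemma primeFactors_primorial_eq (N : ℕ) : (primorial N).primeFactors = N.primesLE := by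
  rw [primorial, ← Nat.primesLE_eq_filter_range]
  exact Nat.primeFactors_prod fun p hp => (Nat.mem_primesLE.mp hp).2

lemma tendsto_primorial : Tendsto primorial atTop atTop := by
  rw [tendsto_atTop]
  intro b
  obtain ⟨p, hb, hp⟩ := Nat.exists_infinite_primes b
  filter_upwards [eventually_ge_atTop p] with N hN
  have : p ∈ (primorial N).primeFactors := by
    rw [primeFactors_primorial_eq]; exact Nat.mem_primesLE.mpr ⟨hN, hp⟩
  exact hb.trans (Nat.le_of_mem_primeFactors this)

lemma liminf_real (m : ℕ) (hm : 0 < m) {C : ℝ}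
    (hC : Tendsto (fun N : ℕ => ∏ p ∈ N.primesLE, gfac m p) atTop (𝓝 C)) :
    Filter.liminf (fun n : ℕ => (genTotient (4 * m) n : ℝ) * Real.log (Real.log n) / (n : ℝ) ^ (4 * m))
      Filter.atTop = C * Real.exp (-Real.eulerMascheroniConstant) := by
  set f := fun n : ℕ => (genTotient (4 * m) n : ℝ) * Real.log (Real.log n) / (n : ℝ) ^ (4 * m) with hf
  set V := C * Real.exp (-Real.eulerMascheroniConstant)
  have hC0 : 0 ≤ C := ge_of_tendsto' hC fun N =>
    Finset.prod_nonneg fun p hp => (gfac_bounds m (Nat.mem_primesLE.mp hp).2).1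
  have hfeq : ∀ n : ℕ, n ≠ 0 → f n = (∏ p ∈ n.primeFactors, (1 - 1 / (p : ℝ))) *
      (∏ p ∈ n.primeFactors, gfac m p) * Real.log (Real.log n) := by
    intro n hn
    rw [← density_eq m hm n hn]
    simp only [hf]; ring
  have hlogn : Tendsto (fun n : ℕ => Real.log n) atTop atTop :=
    Real.tendsto_log_atTop.comp tendsto_natCast_atTop_atTop
  have hlow : ∀ a < V, ∀ᶠ n in atTop, a ≤ f n := by
    intro a ha
    have ht := (tendsto_lower.comp hlogn).const_mul C
    filter_upwards [ht.eventually (eventually_ge_nhds ha), eventually_ne_atTop 0,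
      hlogn.eventually_ge_atTop (Real.exp 1)] with n h1 h2 h3
    refine h1.trans ?_
    rw [hfeq n h2]
    have h4 := prod_inv_lower n h2 h3
    have h5 := le_prod_gfac hC n
    have h6 : 1 ≤ Real.log (Real.log n) :=
      (Real.le_log_iff_exp_le (lt_of_lt_of_le (Real.exp_pos 1) h3)).mpr h3
    have h7 : 0 ≤ ∏ p ∈ n.primeFactors, (1 - 1 / (p : ℝ)) :=
      Finset.prod_nonneg fun p hp => (inv_bounds (Nat.prime_of_mem_primeFactors hp)).1
    simp only [Function.comp]
    calc C * (mprod ⌊Real.log n⌋₊ * (1 - 1 / Real.log (Real.log n)) * Real.log (Real.log n))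
        = (mprod ⌊Real.log n⌋₊ * (1 - 1 / Real.log (Real.log n))) * C * Real.log (Real.log n) := by ring
      _ ≤ _ := by gcongr
  have hupp : ∀ b > V, ∃ᶠ n in atTop, f n ≤ b := by
    intro b hb
    apply tendsto_primorial.frequently
    apply Eventually.frequently
    have h1 := (mertens_three.add (tendsto_mprod_zero.mul_const (Real.log (Real.log 4)))).mul hC
    rw [zero_mul, add_zero, mul_comm] at h1
    filter_upwards [h1.eventually (eventually_le_nhds hb), eventually_ge_atTop 2] with N h2 hN
    refine le_trans ?_ h2
    have hN' : (2 : ℝ) ≤ N := by exact_mod_cast hN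
    rw [hfeq _ (primorial_pos N).ne', primeFactors_primorial_eq]
    have hth : Real.log (primorial N) = Chebyshev.theta N := by
      rw [Chebyshev.theta_eq_log_primorial, Nat.floor_natCast]
    have hpos := Chebyshev.theta_pos hN'
    have hl4 : 0 < Real.log 4 := Real.log_pos (by norm_num)
    have h3 : Real.log (Real.log (primorial N)) ≤ Real.log N + Real.log (Real.log 4) := by
      rw [hth, add_comm, ← Real.log_mul hl4.ne' (by linarith)]
      exact Real.log_le_log hpos (Chebyshev.theta_le_log4_mul_x (by linarith))
    have h4 := mprod_nonneg N
    have h5 : 0 ≤ ∏ p ∈ N.primesLE, gfac m p :=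
      Finset.prod_nonneg fun p hp => (gfac_bounds m (Nat.mem_primesLE.mp hp).2).1
    have h6 := mul_le_mul_of_nonneg_left h3 (mul_nonneg h4 h5)
    unfold mprod at h6 ⊢
    linarith
  have hbdd : IsBoundedUnder (· ≥ ·) atTop f := ⟨V - 1, by
    rw [eventually_map]; exact hlow (V - 1) (by linarith)⟩
  have hcob : IsCoboundedUnder (· ≥ ·) atTop f :=
    IsCoboundedUnder.of_frequently_le (hupp (V + 1) (by linarith))
  apply le_antisymm
  · refine le_of_forall_gt_imp_ge_of_dense fun b hb => ?_
    exact liminf_le_of_frequently_le (hupp b hb) hbdd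
  · refine le_of_forall_lt_imp_le_of_dense fun a ha => ?_
    exact le_liminf_of_le hcob (hlow a ha)

/-- Theorem 7 (keven, case `k ≡ 0 mod 4`): the minimal order of `Φ_k(n)` is
`(2^{k/2}/(2^{k/2}-1)) ζ(k/2)^{-1} e^{-γ} n^k / log log n`. -/
theorem minimal_order_zero_mod_four (k : ℕ) (hk : 4 ≤ k) (hmod : k % 4 = 0) :
    (↑(Filter.liminf
        (fun n : ℕ => (genTotient k n : ℝ) * Real.log (Real.log n) / (n : ℝ) ^ k)
        Filter.atTop : ℝ) : ℂ) =
      (2 : ℂ) ^ (k / 2) / ((2 : ℂ) ^ (k / 2) - 1) * (riemannZeta (k / 2))⁻¹ *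
        (Real.exp (-Real.eulerMascheroniConstant) : ℝ) := by
  obtain ⟨m, rfl⟩ : ∃ m, k = 4 * m := ⟨k / 4, by omega⟩
  have hm : 0 < m := by omega
  obtain ⟨C, hC, hCz⟩ := tendsto_gfac m hm
  rw [liminf_real m hm hC, Complex.ofReal_mul, hCz]
  have e1 : 4 * m / 2 = 2 * m := by omega
  have e2 : ((4 * m : ℕ) : ℂ) / 2 = ((2 * m : ℕ) : ℂ) := by push_cast; ring
  rw [e1, e2]
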